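/- Let $\bar a_P > 0$, $\bar v_P > 0$, $s > 0$, and $\theta, x_P, y_P, v_{Px}, v_{Py}, t \in \mathbb{R}$, and assume $v_{Px}\cos\theta + v_{Py}\sin\theta = \dfrac{\bar v_P^2-v_{Px}^2-v_{Py}^2-\bar a_P^2 s^2}{2\bar a_P s}$. Define $X(t) = x_P+v_{Px}t+\tfrac{1}{2}\bar a_P\cos\theta\,(2ts-s^2)$, $Y(t) = y_P+v_{Py}t+\tfrac{1}{2}\bar a_P\sin\theta\,(2ts-s^2)$ and $c' = (x_P+\bar v_P v_{Px}/\bar a_P,\; y_P+\bar v_P v_{Py}/\bar a_P)$. Then \[(X(t)-c'_x)^2+(Y(t)-c'_y)^2 = (v_{Px}^2+v_{Py}^2)\Big(t-\tfrac{\bar v_P}{\bar a_P}\Big)^2 + \tfrac{1}{2}(2t-s)\Big(t-\tfrac{\bar v_P}{\bar a_P}\Big)\big(\bar v_P^2-v_{Px}^2-v_{Py}^2-\bar a_P^2 s^2\big) + \tfrac{1}{4}\bar a_P^2(2ts-s^2)^2.\] Moreover, writing $\rho = \sqrt{v_{Px}^2+v_{Py}^2}$, if $s = (\bar v_P-\rho)/\bar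 a_P$ or $s = (\bar v_P+\rho)/\bar a_P$, then the right-hand side equals $\Big(\bar v_P t - \dfrac{v_{Px}^2+v_{Py}^2+\bar v_P^2}{2\bar a_P}\Big)^2$. -/

import Mathlib

/-!
Relative to `c'`, the pursuer's position is `(t - V / a) v + l e`, where `e` is the unit vector of
acceleration and `l = a (2 t s - s²) / 2`. Expanding the squared norm leaves the cross term
`⟪v, e⟫`, which is known because the speed `‖v + a s e‖` at time `s` is `V`. At the extreme values
`a s = V - r` with `r = ± ‖v‖`, the expansion is the square of `r (t - V / a) + l`.
-/

open scoped RealInnerProductSpace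

section InnerProductSpace

variable {E : Type*} [NormedAddCommGroup E] [InnerProductSpace ℝ E] {e : E}

/-- The position at time `t ≥ s` of a point that starts at `x` with velocity `v`, has acceleration
`a • e` up to time `s` and moves at constant velocity afterwards. -/
noncomputable def coastingPosition (a s : ℝ) (x v e : E) (t : ℝ) : E :=
  x + t • v + (1 / 2 * a * (2 * t * s - s ^ 2)) • e

/-- The reference center `c'` of the oval of points reachable from position `x` and velocity `v`
with acceleration `a` and maximum speed `V`. -/
noncomputable def ovalCenter (a V : ℝ) (x v : E) : E :=
  x + (V / a) • v

theorem coastingPosition_sub_ovalCenter (a V s t : ℝ) (x v e : E) :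
    coastingPosition a s x v e t - ovalCenter a V x v =
      (t - V / a) • v + (1 / 2 * a * (2 * t * s - s ^ 2)) • e := by
  unfold coastingPosition ovalCenter
  module

theorem norm_add_smul_sq_of_norm_eq_one (he : ‖e‖ = 1) (v : E) (l : ℝ) :
    ‖v + l • e‖ ^ 2 = ‖v‖ ^ 2 + 2 * l * ⟪v, e⟫ + l ^ 2 := by
  rw [norm_add_sq_real, real_inner_smul_right, norm_smul, he, mul_one, Real.norm_eq_abs, sq_abs,
    mul_assoc]

theorem norm_add_smul_sq_eq_iff_inner_eq_div (he : ‖e‖ = 1) {l : ℝ} (hl : l ≠ 0) (v : E) (w : ℝ) :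
    ‖v + l • e‖ ^ 2 = w ↔ ⟪v, e⟫ = (w - ‖v‖ ^ 2 - l ^ 2) / (2 * l) := by
  rw [norm_add_smul_sq_of_norm_eq_one he, eq_div_iff (mul_ne_zero two_ne_zero hl)]
  constructor <;> intro h <;> linarith

theorem norm_coastingPosition_sub_ovalCenter_sq (he : ‖e‖ = 1) {a V s : ℝ} {v : E}
    (hV : ‖v + (a * s) • e‖ ^ 2 = V ^ 2) (x : E) (t : ℝ) :
    ‖coastingPosition a s x v e t - ovalCenter a V x v‖ ^ 2 =
      ‖v‖ ^ 2 * (t - V / a) ^ 2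
        + 1 / 2 * (2 * t - s) * (t - V / a) * (V ^ 2 - ‖v‖ ^ 2 - a ^ 2 * s ^ 2)
        + 1 / 4 * a ^ 2 * (2 * t * s - s ^ 2) ^ 2 := by
  rw [norm_add_smul_sq_of_norm_eq_one he] at hV
  rw [coastingPosition_sub_ovalCenter, norm_add_smul_sq_of_norm_eq_one he, norm_smul, mul_pow,
    Real.norm_eq_abs, sq_abs, real_inner_smul_left]
  linear_combination 1 / 2 * (2 * t - s) * (t - V / a) * hV

end InnerProductSpace

section Field

variable {K : Type*} [Field K] [NeZero (2 : K)] {a s V r : K}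

theorem radial_displacement_eq_of_mul_eq_sub (ha : a ≠ 0) (hs : a * s = V - r) (t : K) :
    r * (t - V / a) + 1 / 2 * a * (2 * t * s - s ^ 2) = V * t - (r ^ 2 + V ^ 2) / (2 * a) := by
  obtain rfl : V = a * s + r := by rw [hs, sub_add_cancel]
  field_simp
  ring

theorem oval_expansion_eq_sq_of_mul_eq_sub (ha : a ≠ 0) (hs : a * s = V - r) (t : K) :
    r ^ 2 * (t - V / a) ^ 2
        + 1 / 2 * (2 * t - s) * (t - V / a) * (V ^ 2 - r ^ 2 - a ^ 2 * s ^ 2)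
        + 1 / 4 * a ^ 2 * (2 * t * s - s ^ 2) ^ 2 =
      (V * t - (r ^ 2 + V ^ 2) / (2 * a)) ^ 2 := by
  have cross_term : V ^ 2 - r ^ 2 - a ^ 2 * s ^ 2 = 2 * r * (a * s) := by
    rw [← mul_pow, hs]
    ring
  rw [← radial_displacement_eq_of_mul_eq_sub ha hs t, cross_term]
  have four_eq : (4 : K) = 2 * 2 := by norm_num
  rw [four_eq]
  field_simp
  ring

end Field

theorem oval_distance_formula_general {E : Type*} [NormedAddCommGroup E] [InnerProductSpace ℝ E]
    {a V s : ℝ} {v e : E} (ha : a ≠ 0) (hs : s ≠ 0) (he : ‖e‖ = 1)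
    (hrel : ⟪v, e⟫ = (V ^ 2 - ‖v‖ ^ 2 - a ^ 2 * s ^ 2) / (2 * a * s)) (x : E) (t : ℝ) :
    ‖coastingPosition a s x v e t - ovalCenter a V x v‖ ^ 2 =
      ‖v‖ ^ 2 * (t - V / a) ^ 2
        + 1 / 2 * (2 * t - s) * (t - V / a) * (V ^ 2 - ‖v‖ ^ 2 - a ^ 2 * s ^ 2)
        + 1 / 4 * a ^ 2 * (2 * t * s - s ^ 2) ^ 2 ∧
    (s = (V - ‖v‖) / a ∨ s = (V + ‖v‖) / a →
      ‖v‖ ^ 2 * (t - V / a) ^ 2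
          + 1 / 2 * (2 * t - s) * (t - V / a) * (V ^ 2 - ‖v‖ ^ 2 - a ^ 2 * s ^ 2)
          + 1 / 4 * a ^ 2 * (2 * t * s - s ^ 2) ^ 2 =
        (V * t - (‖v‖ ^ 2 + V ^ 2) / (2 * a)) ^ 2) := by
  constructor
  · have hV : ‖v + (a * s) • e‖ ^ 2 = V ^ 2 := by
      rw [norm_add_smul_sq_eq_iff_inner_eq_div he (mul_ne_zero ha hs), hrel, mul_pow, mul_assoc]
    exact norm_coastingPosition_sub_ovalCenter_sq he hV x t
  · rintro (hs_min | hs_max)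
    · exact oval_expansion_eq_sq_of_mul_eq_sub ha (by rw [hs_min, mul_div_cancel₀ _ ha]) t
    · rw [← neg_sq ‖v‖]
      refine oval_expansion_eq_sq_of_mul_eq_sub ha ?_ t
      rw [hs_max, mul_div_cancel₀ _ ha, sub_neg_eq_add]

theorem norm_vec_two (x y : ℝ) : ‖!₂[x, y]‖ = √(x ^ 2 + y ^ 2) := by
  simp [EuclideanSpace.norm_eq]

theorem norm_vec_two_sq (x y : ℝ) : ‖!₂[x, y]‖ ^ 2 = x ^ 2 + y ^ 2 := by
  rw [norm_vec_two, Real.sq_sqrt (by positivity)]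

theorem inner_vec_two (x y z w : ℝ) : ⟪!₂[x, y], !₂[z, w]⟫ = x * z + y * w := by
  simp [PiLp.inner_apply, mul_comm]

theorem norm_vec_cos_sin (θ : ℝ) : ‖!₂[Real.cos θ, Real.sin θ]‖ = 1 := by
  rw [norm_vec_two, Real.cos_sq_add_sin_sq, Real.sqrt_one]

theorem coastingPosition_sub_ovalCenter_vec_two (a V s t x y vx vy c d : ℝ) :
    coastingPosition a s !₂[x, y] !₂[vx, vy] !₂[c, d] t - ovalCenter a V !₂[x, y] !₂[vx, vy] =
      !₂[x + vx * t + 1 / 2 * a * c * (2 * t * s - s ^ 2) - (x + V * vx / a),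
        y + vy * t + 1 / 2 * a * d * (2 * t * s - s ^ 2) - (y + V * vy / a)] := by
  ext i
  simp only [coastingPosition, ovalCenter, PiLp.sub_apply, PiLp.add_apply, PiLp.smul_apply,
    smul_eq_mul]
  fin_cases i <;> dsimp <;> ring

/-- Squared distance from the pursuer's post-maximum-speed position to the reference
center `c'` of the oval of reachable points, and its evaluation at the extreme values of
the time-to-maximum-speed `s`. -/
theorem oval_distance_formula
    (aP vP s θ xP yP vPx vPy t : ℝ)
    (haP : 0 < aP) (hvP : 0 < vP) (hs : 0 < s)
    (hrel : vPx * Real.cos θ + vPy * Real.sin θ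
        = (vP ^ 2 - vPx ^ 2 - vPy ^ 2 - aP ^ 2 * s ^ 2) / (2 * aP * s)) :
    let X := xP + vPx * t + (1 / 2) * aP * Real.cos θ * (2 * t * s - s ^ 2)
    let Y := yP + vPy * t + (1 / 2) * aP * Real.sin θ * (2 * t * s - s ^ 2)
    let cx := xP + vP * vPx / aP
    let cy := yP + vP * vPy / aP
    ((X - cx) ^ 2 + (Y - cy) ^ 2
      = (vPx ^ 2 + vPy ^ 2) * (t - vP / aP) ^ 2
        + (1 / 2) * (2 * t - s) * (t - vP / aP)
            * (vP ^ 2 - vPx ^ 2 - vPy ^ 2 - aP ^ 2 * s ^ 2)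
        + (1 / 4) * aP ^ 2 * (2 * t * s - s ^ 2) ^ 2) ∧
    (let ρ := Real.sqrt (vPx ^ 2 + vPy ^ 2)
     (s = (vP - ρ) / aP ∨ s = (vP + ρ) / aP) →
      (vPx ^ 2 + vPy ^ 2) * (t - vP / aP) ^ 2
        + (1 / 2) * (2 * t - s) * (t - vP / aP)
            * (vP ^ 2 - vPx ^ 2 - vPy ^ 2 - aP ^ 2 * s ^ 2)
        + (1 / 4) * aP ^ 2 * (2 * t * s - s ^ 2) ^ 2
      = (vP * t - (vPx ^ 2 + vPy ^ 2 + vP ^ 2) / (2 * aP)) ^ 2) := by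
  have hinner : ⟪!₂[vPx, vPy], !₂[Real.cos θ, Real.sin θ]⟫ =
      (vP ^ 2 - ‖!₂[vPx, vPy]‖ ^ 2 - aP ^ 2 * s ^ 2) / (2 * aP * s) := by
    rw [inner_vec_two, norm_vec_two_sq, ← sub_sub, hrel]
  have h := oval_distance_formula_general haP.ne' hs.ne' (norm_vec_cos_sin θ) hinner !₂[xP, yP] t
  rwa [coastingPosition_sub_ovalCenter_vec_two, norm_vec_two_sq, norm_vec_two_sq, norm_vec_two,
    ← sub_sub (vP ^ 2)] at h
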